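/- Let (R,m) be a Cohen-Macaulay local ring of dimension d. If M is a reduced G-perfect R-module of G-dimension n, then depth_R(M) + depth_R(λM) = d + depth_R(Ext^n_R(M,R)). -/

import Mathlib

open CategoryTheory

noncomputable section

universe u

/-- The `i`-th Ext group `Ext^i_R(M,N)`, as a type (with its `R`-module structure). -/
abbrev extM (R : Type u) [CommRing R] (i : ℕ) (M N : Type u) [AddCommGroup M] [Module R M]
    [AddCommGroup N] [Module R N] : Type u :=
  ((Ext R (ModuleCat.{u} R) i).obj (Opposite.op (ModuleCat.of R M))).obj (ModuleCat.of R N)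

/-- The `i`-th Tor group `Tor^R_i(M,N)`, as a type. -/
abbrev torM (R : Type u) [CommRing R] (i : ℕ) (M N : Type u) [AddCommGroup M] [Module R M]
    [AddCommGroup N] [Module R N] : Type u :=
  ((Tor (ModuleCat.{u} R) i).obj (ModuleCat.of R M)).obj (ModuleCat.of R N)

/-- The `i`-th local cohomology `H^i_I(M)`, as a type. -/
abbrev locCoh (R : Type u) [CommRing R] (I : Ideal R) (i : ℕ) (M : Type u) [AddCommGroup M]
    [Module R M] : Type u :=
  (localCohomology I i).obj (ModuleCat.of R M)

/-- A submodule `N ≤ M` is superfluous if `K ⊔ N = ⊤` implies `K = ⊤`. -/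
def Submodule.IsSuperfluous {R M : Type u} [CommRing R] [AddCommGroup M] [Module R M]
    (N : Submodule R M) : Prop :=
  ∀ K : Submodule R M, K ⊔ N = ⊤ → K = ⊤

/-- A minimal projective resolution of `M` by finitely generated projective modules:
each `P i → Ω^i M` is a projective cover (i.e. has superfluous kernel). -/
structure MinRes (R : Type u) [CommRing R] (M : Type u) [AddCommGroup M] [Module R M] where
  P : ℕ → ModuleCat.{u} R
  projective : ∀ i, Module.Projective R (P i)
  finite : ∀ i, Module.Finite R (P i)
  d : (i : ℕ) → (↥(P (i + 1)) →ₗ[R] ↥(P i))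
  ε : ↥(P 0) →ₗ[R] M
  surj : Function.Surjective ε
  exact0 : LinearMap.range (d 0) = LinearMap.ker ε
  exact : ∀ i, LinearMap.range (d (i + 1)) = LinearMap.ker (d i)
  min_eps : (LinearMap.ker ε).IsSuperfluous
  min_d : ∀ i, (LinearMap.ker (d i)).IsSuperfluous

namespace MinRes

variable {R M : Type u} [CommRing R] [AddCommGroup M] [Module R M]

/-- `T k F` is the Auslander-Bridger transpose `𝒯_{k+1} M = Tr Ω^k M`, computed as the
cokernel of `P_k* → P_{k+1}*`. -/
def T (F : MinRes R M) (k : ℕ) : Type u :=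
  (Module.Dual R ↥(F.P (k + 1))) ⧸ LinearMap.range (F.d k).dualMap

instance (F : MinRes R M) (k : ℕ) : AddCommGroup (F.T k) :=
  inferInstanceAs (AddCommGroup ((Module.Dual R ↥(F.P (k + 1))) ⧸
    LinearMap.range (F.d k).dualMap))

instance (F : MinRes R M) (k : ℕ) : Module R (F.T k) :=
  inferInstanceAs (Module R ((Module.Dual R ↥(F.P (k + 1))) ⧸
    LinearMap.range (F.d k).dualMap))

/-- The transpose `Tr M = coker(P₀* → P₁*)` computed from a minimal projective presentation. -/
abbrev Tr (F : MinRes R M) : Type u := F.T 0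

/-- `λM = ΩTr M`, realized as the image of `P₀* → P₁*` for a minimal projective
presentation `P₁ → P₀ → M → 0`. -/
def lambdaMod (F : MinRes R M) : Type u :=
  ↥(LinearMap.range (F.d 0).dualMap)

instance (F : MinRes R M) : AddCommGroup F.lambdaMod :=
  inferInstanceAs (AddCommGroup ↥(LinearMap.range (F.d 0).dualMap))

instance (F : MinRes R M) : Module R F.lambdaMod :=
  inferInstanceAs (Module R ↥(LinearMap.range (F.d 0).dualMap))

end MinRes

/-- `M` is a horizontally linked `R`-module, i.e. `M ≅ λλM`. -/
def IsHorizontallyLinked (R : Type u) [CommRing R] (M : Type u) [AddCommGroup M]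
    [Module R M] : Prop :=
  ∃ (F : MinRes R M) (G : MinRes R F.lambdaMod), Nonempty (G.lambdaMod ≃ₗ[R] M)

/-- `M` and `N` are horizontally linked to each other: `M ≅ λN` and `N ≅ λM`. -/
def MutuallyLinked (A : Type u) [CommRing A] (M N : Type u) [AddCommGroup M] [Module A M]
    [AddCommGroup N] [Module A N] : Prop :=
  ∃ (F : MinRes A M) (G : MinRes A N),
    Nonempty (F.lambdaMod ≃ₗ[A] N) ∧ Nonempty (G.lambdaMod ≃ₗ[A] M)

/-- `M` is linked to `N` by the ideal `c`: `c` annihilates both modules and they are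
horizontally linked to each other as `R ⧸ c`-modules. -/
def LinkedBy (R : Type u) [CommRing R] (c : Ideal R) (M N : Type u) [AddCommGroup M]
    [Module R M] [AddCommGroup N] [Module R N] : Prop :=
  ∃ (hM : Module.IsTorsionBySet R M c) (hN : Module.IsTorsionBySet R N c),
    letI := hM.module
    letI := hN.module
    MutuallyLinked (R ⧸ c) M N

/-- A stable module: no nonzero projective direct summand. -/
def IsStableModule (R : Type u) [CommRing R] (M : Type u) [AddCommGroup M] [Module R M] : Prop :=
  ∀ N : Submodule R M, Module.Projective R ↥N → (∃ N' : Submodule R M, IsCompl N N') → N = ⊥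

/-- `M` has G-dimension zero: `M` is finitely generated and reflexive,
and `Ext^i(M,R) = 0 = Ext^i(M*,R)` for all `i > 0`. -/
def IsGDimZero (R : Type u) [CommRing R] (M : Type u) [AddCommGroup M] [Module R M] : Prop :=
  Module.Finite R M ∧ Function.Bijective (Module.Dual.eval R M) ∧
    (∀ i : ℕ, 0 < i → Subsingleton (extM R i M R)) ∧
    (∀ i : ℕ, 0 < i → Subsingleton (extM R i (Module.Dual R M) R))

/-- `M` admits a resolution of length `≤ n` by modules of G-dimension zero. -/
def GDimLE (R : Type u) [CommRing R] : ℕ → ModuleCat.{u} R → Prop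
  | 0, M => IsGDimZero R ↥M
  | n + 1, M =>
    ∃ (G : ModuleCat.{u} R) (f : ↥G →ₗ[R] ↥M), IsGDimZero R ↥G ∧ Function.Surjective f ∧
      GDimLE R n (ModuleCat.of R ↥(LinearMap.ker f))

/-- The G-dimension of `M`: the minimal length of a resolution of `M` by modules of
G-dimension zero (`∞` if there is none). -/
def GDim (R : Type u) [CommRing R] (M : Type u) [AddCommGroup M] [Module R M] : ℕ∞ :=
  sInf {n : ℕ∞ | ∃ k : ℕ, n = k ∧ GDimLE R k (ModuleCat.of R M)}

/-- The reduced grade of `M`: `rgr M = inf{ i > 0 | Ext^i(M,R) ≠ 0 }`. -/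
def rgr (R : Type u) [CommRing R] (M : Type u) [AddCommGroup M] [Module R M] : ℕ∞ :=
  sInf {n : ℕ∞ | ∃ k : ℕ, n = k ∧ 0 < k ∧ ¬ Subsingleton (extM R k M R)}

/-- The grade of `M`: `gr M = inf{ i ≥ 0 | Ext^i(M,R) ≠ 0 }`. -/
def egrade (R : Type u) [CommRing R] (M : Type u) [AddCommGroup M] [Module R M] : ℕ∞ :=
  sInf {n : ℕ∞ | ∃ k : ℕ, n = k ∧ ¬ Subsingleton (extM R k M R)}

/-- `depth_I(M) = inf{ i | Ext^i(R/I, M) ≠ 0 }`; for `I` the maximal ideal of a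
local ring this is the depth of `M`. -/
def edepth (R : Type u) [CommRing R] (I : Ideal R) (M : Type u) [AddCommGroup M]
    [Module R M] : ℕ∞ :=
  sInf {n : ℕ∞ | ∃ k : ℕ, n = k ∧ ¬ Subsingleton (extM R k (R ⧸ I) M)}

/-- The depth of the local ring `R`. -/
def rdepth (R : Type u) [CommRing R] [IsLocalRing R] : ℕ∞ :=
  edepth R (IsLocalRing.maximalIdeal R) R

/-- `depth_{R_p}(M_p)`. -/
def locDepth (R : Type u) [CommRing R] (p : Ideal R) [p.IsPrime] (M : Type u) [AddCommGroup M]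
    [Module R M] : ℕ∞ :=
  edepth (Localization.AtPrime p) (IsLocalRing.maximalIdeal (Localization.AtPrime p))
    (LocalizedModule p.primeCompl M)

/-- `depth R_p`. -/
def locRingDepth (R : Type u) [CommRing R] (p : Ideal R) [p.IsPrime] : ℕ∞ :=
  rdepth (Localization.AtPrime p)

/-- `Gdim_{R_p}(M_p)`. -/
def locGDim (R : Type u) [CommRing R] (p : Ideal R) [p.IsPrime] (M : Type u) [AddCommGroup M]
    [Module R M] : ℕ∞ :=
  GDim (Localization.AtPrime p) (LocalizedModule p.primeCompl M)

/-- `rgr_{R_p}(M_p)`. -/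
def locRgr (R : Type u) [CommRing R] (p : Ideal R) [p.IsPrime] (M : Type u) [AddCommGroup M]
    [Module R M] : ℕ∞ :=
  rgr (Localization.AtPrime p) (LocalizedModule p.primeCompl M)

/-- `dim_{R_p}(M_p)`, the Krull dimension of the support of `M_p` over `R_p`. -/
def locDim (R : Type u) [CommRing R] (p : Ideal R) [p.IsPrime] (M : Type u) [AddCommGroup M]
    [Module R M] : WithBot ℕ∞ :=
  ringKrullDim ((Localization.AtPrime p) ⧸
    Module.annihilator (Localization.AtPrime p) (LocalizedModule p.primeCompl M))

/-- `M` satisfies the condition `S̃_k`: `depth_{R_p}(M_p) ≥ min{k, depth R_p}` for all primes. -/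
def Stilde (R : Type u) [CommRing R] (k : ℕ) (M : Type u) [AddCommGroup M] [Module R M] : Prop :=
  ∀ (p : Ideal R) (_ : p.IsPrime), min (k : ℕ∞) (locRingDepth R p) ≤ locDepth R p M

/-- `M` satisfies Serre's condition `(S_k)`:
`depth_{R_p}(M_p) ≥ min{k, dim_{R_p}(M_p)}` for all primes. -/
def SerreS (R : Type u) [CommRing R] (k : ℕ) (M : Type u) [AddCommGroup M] [Module R M] : Prop :=
  ∀ (p : Ideal R) (_ : p.IsPrime),
    min (k : WithBot ℕ∞) (locDim R p M) ≤ (locDepth R p M : WithBot ℕ∞)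

/-- `M` is a `k`-th syzygy module. -/
def IsKthSyzygy (R : Type u) [CommRing R] : ℕ → ModuleCat.{u} R → Prop
  | 0, _ => True
  | k + 1, M =>
    ∃ (P : ModuleCat.{u} R) (f : ↥M →ₗ[R] ↥P), Module.Projective R ↥P ∧ Module.Finite R ↥P ∧
      Function.Injective f ∧ IsKthSyzygy R k (ModuleCat.of R (↥P ⧸ LinearMap.range f))

/-- The `I`-torsion submodule `Γ_I(M) = { x | I^n x = 0 for some n }`. -/
def gammaTorsion (R : Type u) [CommRing R] (I : Ideal R) (M : Type u) [AddCommGroup M]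
    [Module R M] : Submodule R M where
  carrier := {x | ∃ n : ℕ, ∀ a ∈ I ^ n, a • x = 0}
  zero_mem' := ⟨0, fun a _ => smul_zero a⟩
  add_mem' := by
    rintro x y ⟨n, hn⟩ ⟨m, hm⟩
    exact ⟨n + m, fun a ha => by
      rw [smul_add, hn a (Ideal.pow_le_pow_right (Nat.le_add_right n m) ha),
        hm a (Ideal.pow_le_pow_right (Nat.le_add_left m n) ha), add_zero]⟩
  smul_mem' := by
    rintro c x ⟨n, hn⟩
    exact ⟨n, fun a ha => by rw [smul_comm, hn a ha, smul_zero]⟩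

/-- `N` has finite flat dimension (characterized by uniform vanishing of `Tor`). -/
def HasFiniteFlatDim (R : Type u) [CommRing R] (N : Type u) [AddCommGroup N] [Module R N] : Prop :=
  ∃ n : ℕ, ∀ i : ℕ, n < i → ∀ (M : ModuleCat.{u} R), Subsingleton (torM R i ↥M N)

/-- `N` has finite injective dimension (characterized by uniform vanishing of `Ext`). -/
def HasFiniteInjDim (R : Type u) [CommRing R] (N : Type u) [AddCommGroup N] [Module R N] : Prop :=
  ∃ n : ℕ, ∀ i : ℕ, n < i → ∀ (M : ModuleCat.{u} R), Subsingleton (extM R i ↥M N)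

/-- `K` is a semidualizing `R`-module. -/
def IsSemidualizing (R : Type u) [CommRing R] (K : Type u) [AddCommGroup K] [Module R K] : Prop :=
  Module.Finite R K ∧ Function.Bijective (LinearMap.lsmul R K) ∧
    ∀ i : ℕ, 0 < i → Subsingleton (extM R i K K)

/-- The biduality map `M → Hom(Hom(M,K),K)`. -/
def evalK (R : Type u) [CommRing R] (K M : Type u) [AddCommGroup K] [Module R K]
    [AddCommGroup M] [Module R M] : M →ₗ[R] ((M →ₗ[R] K) →ₗ[R] K) :=
  LinearMap.applyₗ

/-- `M` has `G_K`-dimension zero. -/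
def IsGKDimZero (R : Type u) [CommRing R] (K M : Type u) [AddCommGroup K] [Module R K]
    [AddCommGroup M] [Module R M] : Prop :=
  Module.Finite R M ∧ Function.Bijective (evalK R K M) ∧
    (∀ i : ℕ, 0 < i → Subsingleton (extM R i M K)) ∧
    (∀ i : ℕ, 0 < i → Subsingleton (extM R i (M →ₗ[R] K) K))

/-- `M` admits a resolution of length `≤ n` by modules of `G_K`-dimension zero. -/
def GKDimLE (R : Type u) [CommRing R] (K : Type u) [AddCommGroup K] [Module R K] :
    ℕ → ModuleCat.{u} R → Prop
  | 0, M => IsGKDimZero R K ↥M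
  | n + 1, M =>
    ∃ (G : ModuleCat.{u} R) (f : ↥G →ₗ[R] ↥M), IsGKDimZero R K ↥G ∧ Function.Surjective f ∧
      GKDimLE R K n (ModuleCat.of R ↥(LinearMap.ker f))

/-- The `G_K`-dimension of `M`. -/
def GKDim (R : Type u) [CommRing R] (K M : Type u) [AddCommGroup K] [Module R K]
    [AddCommGroup M] [Module R M] : ℕ∞ :=
  sInf {n : ℕ∞ | ∃ k : ℕ, n = k ∧ GKDimLE R K k (ModuleCat.of R M)}

/-- The grade of a module, `gr_R(M) = grade(Ann_R(M), R) = inf{i | Ext^i(R/Ann M, R) ≠ 0}`. -/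
def grAnn (R : Type u) [CommRing R] (M : Type u) [AddCommGroup M] [Module R M] : ℕ∞ :=
  egrade R (R ⧸ Module.annihilator R M)

/-- The grade of an ideal, `grade(I) = inf{i | Ext^i(R/I, R) ≠ 0}`. -/
def gradeI (R : Type u) [CommRing R] (I : Ideal R) : ℕ∞ :=
  egrade R (R ⧸ I)

/-- The ideal `I` is `G_K`-Gorenstein: `R/I` is `G_K`-perfect and `Ext^{gr I}(R/I, K)` is
cyclic. -/
def IsGKGorensteinIdeal (R : Type u) [CommRing R] (K : Type u) [AddCommGroup K] [Module R K]
    (I : Ideal R) : Prop :=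
  ∃ n : ℕ, grAnn R (R ⧸ I) = (n : ℕ∞) ∧ GKDim R K (R ⧸ I) = (n : ℕ∞) ∧
    ∃ x : extM R n (R ⧸ I) K, Submodule.span R {x} = ⊤

end

/-!
Write `E = Ext^n(M, R)` and `k = R/m`, and measure depth by `inf {i | Ext^i(k, -) ≠ 0}`. Three
facts combine.

* `depth M + n = d` (Auslander–Bridger). Along syzygies this reduces to `0 → Z → P → M → 0` with
  `P` free, `Z` of G-dimension zero and `Ext^1(M, R) ≠ 0`. If `depth M` were at least `d`, the map
  `Ext^d(k, Z) → Ext^d(k, P)` would be injective; since `Ext^d(k, Z) = Hom(Z*, Ext^d(k, R))`, the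
  map `P* → Z*` would be onto by Nakayama, that is `Ext^1(M, R) = 0`.
* `grade E ≥ n`, because `M` has G-dimension at most `n`. By Ischebeck's inequality
  `depth E ≤ dim R - grade E`, hence `depth E + n ≤ d`.
* `depth λM = depth E + n`. Here `λM` is the image of `P₀* → (ΩM)*`. If `n = 1`, then
  `0 → λM → (ΩM)* → E → 0` is exact and `depth E < depth (ΩM)*`. If `n > 1`, then `λM = (ΩM)*`,
  and `0 → (ΩM)* → P₁* → λΩM → 0` is exact, so each syzygy step raises the depth by one.
-/

noncomputable section

universe u

/-- `Ext^i_R(M, N)` as morphisms in the derived category. The long exact sequences and the Yoneda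
product are available in this model, to which `extM` is compared by `extMEquiv`. -/
abbrev ModExt (R : Type u) [CommRing R] (i : ℕ) (M N : Type u) [AddCommGroup M] [Module R M]
    [AddCommGroup N] [Module R N] : Type u :=
  Abelian.Ext (ModuleCat.of R M) (ModuleCat.of R N) i

section Comparison

variable {R : Type u} [CommRing R]

section

variable {M N : ModuleCat.{u} R} (P : ProjectiveResolution M) (i : ℕ)

theorem smul_extMk (r : R) (f : P.complex.X i ⟶ N) (hf : P.complex.d (i + 1) i ≫ f = 0) :
    r • P.extMk f (i + 1) rfl hf =
      P.extMk (r • f) (i + 1) rfl (by rw [Linear.comp_smul, hf, smul_zero]) := by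
  rw [Abelian.Ext.smul_eq_comp_mk₀, ProjectiveResolution.extMk_comp_mk₀]
  congr 1

/-- The short complex `Hom(P_{i-1}, N) → Hom(P_i, N) → Hom(P_{i+1}, N)`; for `i = 0` the truncated
subtraction makes its first map an endomorphism of `Hom(P_0, N)`, which is zero. -/
abbrev homShortComplex (N : ModuleCat.{u} R) : ShortComplex (ModuleCat.{u} R) :=
  (P.complex.linearYonedaObj R N).sc' (i - 1) i (i + 1)

/-- The class in `Ext^i` of an `i`-cocycle of a projective resolution. -/
def cocycleClass (N : ModuleCat.{u} R) :
    LinearMap.ker (homShortComplex P i N).g.hom →ₗ[R] Abelian.Ext M N i where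
  toFun x := P.extMk (x.1 : P.complex.X i ⟶ N) (i + 1) rfl x.2
  map_add' x y := (P.add_extMk _ _ _ rfl x.2 y.2).symm
  map_smul' r x := (smul_extMk P i r _ x.2).symm

theorem cocycleClass_surjective : Function.Surjective (cocycleClass P i N) := fun α => by
  obtain ⟨f, hf, rfl⟩ := P.extMk_surjective α (i + 1) rfl
  exact ⟨⟨f, hf⟩, rfl⟩

theorem extMk_zero_eq_zero_iff (f : P.complex.X 0 ⟶ N) (hf : P.complex.d 1 0 ≫ f = 0) :
    P.extMk f 1 rfl hf = 0 ↔ f = 0 := by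
  refine ⟨fun h => ?_, fun h => by subst h; exact P.extMk_zero 1 rfl⟩
  rw [← P.extEquivCohomologyClass.apply_eq_iff_eq, P.extEquivCohomologyClass_extMk,
    P.extEquivCohomologyClass_zero, CochainComplex.HomComplex.CohomologyClass.mk_eq_zero_iff,
    CochainComplex.HomComplex.Cocycle.toSingleMk_mem_coboundaries_iff _ _ _ _ _ 1 (by simp)] at h
  obtain ⟨g, hg⟩ := h
  have hg0 : g = 0 := (CochainComplex.isZero_of_isStrictlyLE P.cochainComplex 0 1).eq_of_src g 0
  rw [hg0, Limits.comp_zero] at hg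
  exact ((P.cochainComplexXIso _ 0 rfl).cancel_iso_hom_left _ _).1
    (hg.symm.trans Limits.comp_zero.symm)

theorem ker_cocycleClass :
    LinearMap.ker (cocycleClass P i N) =
      LinearMap.range (homShortComplex P i N).moduleCatToCycles := by
  ext ⟨f, hf⟩
  have hrange : (⟨f, hf⟩ ∈ LinearMap.range (homShortComplex P i N).moduleCatToCycles) ↔
      ∃ z, (homShortComplex P i N).f z = f :=
    exists_congr fun _ => Subtype.ext_iff
  rw [hrange]
  cases i with
  | zero =>
    have hzero : (homShortComplex P 0 N).f = 0 :=
      (P.complex.linearYonedaObj R N).shape 0 0 (Nat.succ_ne_zero 0)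
    refine (extMk_zero_eq_zero_iff P f hf).trans ?_
    rw [hzero]
    exact ⟨fun h => ⟨0, h.symm⟩, fun ⟨_, h⟩ => h.symm⟩
  | succ i => exact P.extMk_eq_zero_iff f (i + 2) rfl hf i rfl

end

/-- The comparison between the derived-functor and the derived-category models of `Ext`. -/
def extMEquiv (i : ℕ) (M N : Type u) [AddCommGroup M] [Module R M] [AddCommGroup N] [Module R N] :
    extM R i M N ≃ₗ[R] ModExt R i M N :=
  let P := ProjectiveResolution.of (ModuleCat.of R M)
  let S := homShortComplex P i (ModuleCat.of R N)
  have hprev : (ComplexShape.up ℕ).prev i = i - 1 := by cases i <;> simp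
  (P.isoExt (R := R) i (ModuleCat.of R N)
      ≪≫ HomologicalComplex.homologyIsoSc' _ (i - 1) i (i + 1) hprev (by simp)
      ≪≫ S.moduleCatHomologyIso).toLinearEquiv ≪≫ₗ
    Submodule.quotEquivOfEq _ _ (ker_cocycleClass P i).symm ≪≫ₗ
    (cocycleClass P i (ModuleCat.of R N)).quotKerEquivOfSurjective (cocycleClass_surjective P i)

end Comparison

section Ext

variable {R : Type u} [CommRing R] {i : ℕ}
  {A B C X Y : Type u} [AddCommGroup A] [Module R A] [AddCommGroup B] [Module R B]
  [AddCommGroup C] [Module R C] [AddCommGroup X] [Module R X] [AddCommGroup Y] [Module R Y]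

/-- `Hom(A, B) ≃ Ext^0(A, B)`. -/
def homEquivExtZero (A B : Type u) [AddCommGroup A] [Module R A] [AddCommGroup B] [Module R B] :
    (A →ₗ[R] B) ≃ₗ[R] ModExt R 0 A B :=
  (ModuleCat.homLinearEquiv (S := R) (M := ModuleCat.of R A) (N := ModuleCat.of R B)).symm ≪≫ₗ
    (Abelian.Ext.linearEquiv₀ (R := R)).symm

/-- The pushforward `Ext^i(X, A) → Ext^i(X, B)` along `A → B`, linear also in the map `A → B`. -/
def extPush (i : ℕ) (X A B : Type u) [AddCommGroup X] [Module R X] [AddCommGroup A] [Module R A]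
    [AddCommGroup B] [Module R B] : (A →ₗ[R] B) →ₗ[R] ModExt R i X A →ₗ[R] ModExt R i X B :=
  (Abelian.Ext.bilinearCompOfLinear R (ModuleCat.of R X) (ModuleCat.of R A) (ModuleCat.of R B)
      i 0 i (add_zero i)).flip ∘ₗ (homEquivExtZero A B).toLinearMap

theorem extPush_apply (f : A →ₗ[R] B) (x : ModExt R i X A) :
    extPush i X A B f x = x.comp (Abelian.Ext.mk₀ (ModuleCat.ofHom f)) (add_zero i) :=
  rfl

theorem extPush_comp (f : A →ₗ[R] B) (g : B →ₗ[R] C) (x : ModExt R i X A) :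
    extPush i X A C (g ∘ₗ f) x = extPush i X B C g (extPush i X A B f x) := by
  simp [extPush_apply, ModuleCat.ofHom_comp, ← Abelian.Ext.mk₀_comp_mk₀]

theorem extPush_id (x : ModExt R i X A) : extPush i X A A LinearMap.id x = x := by
  simp [extPush_apply]

/-- The pullback `Ext^i(B, Y) → Ext^i(A, Y)` along `A → B`. -/
def extPull (i : ℕ) (Y : Type u) [AddCommGroup Y] [Module R Y] (f : A →ₗ[R] B) :
    ModExt R i B Y →ₗ[R] ModExt R i A Y :=
  (Abelian.Ext.mk₀ (ModuleCat.ofHom f)).precompOfLinear R (ModuleCat.of R Y) (zero_add i)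

theorem extPull_comp (f : A →ₗ[R] B) (g : B →ₗ[R] C) (x : ModExt R i C Y) :
    extPull i Y (g ∘ₗ f) x = extPull i Y f (extPull i Y g x) := by
  simp [extPull, ModuleCat.ofHom_comp, Abelian.Ext.mk₀_comp_mk₀_assoc]

theorem extPull_id (x : ModExt R i A Y) : extPull i Y LinearMap.id x = x := by
  simp [extPull]

theorem subsingleton_ext_congr_right (e : A ≃ₗ[R] B) :
    Subsingleton (ModExt R i X A) ↔ Subsingleton (ModExt R i X B) := by
  have hinj : ∀ {A B : Type u} [AddCommGroup A] [Module R A] [AddCommGroup B] [Module R B]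
      (e : A ≃ₗ[R] B), Function.Injective (extPush i X A B e.toLinearMap) := fun e =>
    Function.LeftInverse.injective (g := extPush i X _ _ e.symm.toLinearMap) fun x => by
      rw [← extPush_comp, e.symm_comp, extPush_id]
  exact ⟨fun _ => (hinj e.symm).subsingleton, fun _ => (hinj e).subsingleton⟩

theorem subsingleton_ext_congr_left (e : A ≃ₗ[R] B) :
    Subsingleton (ModExt R i A Y) ↔ Subsingleton (ModExt R i B Y) := by
  have hinj : ∀ {A B : Type u} [AddCommGroup A] [Module R A] [AddCommGroup B] [Module R B]
      (e : A ≃ₗ[R] B), Function.Injective (extPull i Y e.toLinearMap) := fun e =>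
    Function.LeftInverse.injective (g := extPull i Y e.symm.toLinearMap) fun x => by
      rw [← extPull_comp, e.comp_symm, extPull_id]
  exact ⟨fun _ => (hinj e).subsingleton, fun _ => (hinj e.symm).subsingleton⟩

theorem subsingleton_ext_zero_iff :
    Subsingleton (ModExt R 0 A B) ↔ Subsingleton (A →ₗ[R] B) :=
  (homEquivExtZero A B).symm.toEquiv.subsingleton_congr

instance subsingleton_ext_succ_of_projective [Module.Projective R A] :
    Subsingleton (ModExt R (i + 1) A B) :=
  have : Projective (ModuleCat.of R A) := ModuleCat.projective_of_categoryTheory_projective _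
  Abelian.Ext.subsingleton_of_projective _ _ _

end Ext

/-- The sequence `0 → A → B → C → 0` given by `f` and `g` is exact. -/
structure IsShortExact {R A B C : Type u} [CommRing R] [AddCommGroup A] [Module R A]
    [AddCommGroup B] [Module R B] [AddCommGroup C] [Module R C]
    (f : A →ₗ[R] B) (g : B →ₗ[R] C) : Prop where
  injective : Function.Injective f
  exact : Function.Exact f g
  surjective : Function.Surjective g

section ShortExact

variable {R : Type u} [CommRing R] {i : ℕ}
  {A B C X Y : Type u} [AddCommGroup A] [Module R A] [AddCommGroup B] [Module R B]
  [AddCommGroup C] [Module R C] [AddCommGroup X] [Module R X] [AddCommGroup Y] [Module R Y]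

theorem isShortExact_ker_subtype {g : B →ₗ[R] C} (hg : Function.Surjective g) :
    IsShortExact (LinearMap.ker g).subtype g :=
  ⟨(LinearMap.ker g).injective_subtype, LinearMap.exact_subtype_ker_map g, hg⟩

theorem isShortExact_subtype_mkQ (N : Submodule R B) : IsShortExact N.subtype N.mkQ :=
  ⟨N.injective_subtype, LinearMap.exact_subtype_mkQ N, N.mkQ_surjective⟩

namespace IsShortExact

variable {f : A →ₗ[R] B} {g : B →ₗ[R] C}

theorem shortExact (h : IsShortExact f g) :
    (ModuleCat.shortComplexOfCompEqZero f g h.exact.linearMap_comp_eq_zero).ShortExact where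
  exact := ModuleCat.shortComplex_exact _ h.exact
  mono_f := (ModuleCat.mono_iff_injective _).2 h.injective
  epi_g := (ModuleCat.epi_iff_surjective _).2 h.surjective

/-- The connecting map `Ext^i(A, Y) → Ext^{i+1}(C, Y)` of a short exact sequence. -/
def connecting (h : IsShortExact f g) (i : ℕ) (Y : Type u) [AddCommGroup Y] [Module R Y] :
    ModExt R i A Y →ₗ[R] ModExt R (i + 1) C Y :=
  h.shortExact.extClass.precompOfLinear R (ModuleCat.of R Y) (add_comm 1 i)

theorem exact_extPush (h : IsShortExact f g) (i : ℕ) (X : Type u) [AddCommGroup X] [Module R X] :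
    Function.Exact (extPush i X A B f) (extPush i X B C g) := by
  refine fun x => ⟨fun hx => Abelian.Ext.covariant_sequence_exact₂ _ h.shortExact x hx, ?_⟩
  rintro ⟨y, rfl⟩
  rw [← extPush_comp, h.exact.linearMap_comp_eq_zero, map_zero, LinearMap.zero_apply]

theorem extPush_injective_zero (h : IsShortExact f g) :
    Function.Injective (extPush 0 X A B f) :=
  have : Mono (ModuleCat.ofHom f) := (ModuleCat.mono_iff_injective _).2 h.injective
  Abelian.Ext.postcomp_mk₀_injective_of_mono (ModuleCat.of R X) (ModuleCat.ofHom f)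

theorem extPush_injective_succ (h : IsShortExact f g) [Subsingleton (ModExt R i X C)] :
    Function.Injective (extPush (i + 1) X A B f) := by
  refine (injective_iff_map_eq_zero _).2 fun x hx => ?_
  obtain ⟨y, rfl⟩ := Abelian.Ext.covariant_sequence_exact₁ _ h.shortExact x hx rfl
  rw [Subsingleton.elim y 0, Abelian.Ext.zero_comp]

theorem subsingleton_ext_right (h : IsShortExact f g) [Subsingleton (ModExt R i X B)]
    [Subsingleton (ModExt R (i + 1) X A)] : Subsingleton (ModExt R i X C) := by
  refine subsingleton_of_forall_eq 0 fun x => ?_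
  obtain ⟨y, rfl⟩ := Abelian.Ext.covariant_sequence_exact₃ _ h.shortExact x rfl
    (Subsingleton.elim (α := ModExt R (i + 1) X A) _ _)
  rw [Subsingleton.elim y 0, Abelian.Ext.zero_comp]

theorem exact_extPull_connecting (h : IsShortExact f g) (i : ℕ) (Y : Type u) [AddCommGroup Y]
    [Module R Y] : Function.Exact (extPull i Y f) (h.connecting i Y) := fun x => by
  refine ⟨fun hx =>
    Abelian.Ext.contravariant_sequence_exact₁ h.shortExact _ x (add_comm 1 i) hx, ?_⟩
  rintro ⟨y, rfl⟩
  exact h.shortExact.extClass_comp_assoc (h := add_comm 1 i) y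

theorem exists_connecting_eq (h : IsShortExact f g) {x : ModExt R (i + 1) C Y}
    (hx : extPull (i + 1) Y g x = 0) : ∃ y, h.connecting i Y y = x :=
  Abelian.Ext.contravariant_sequence_exact₃ h.shortExact _ x hx (add_comm 1 i)

theorem exists_extPull_eq {x : ModExt R i B Y} (h : IsShortExact f g) (hx : extPull i Y f x = 0) :
    ∃ y, extPull i Y g y = x :=
  Abelian.Ext.contravariant_sequence_exact₂ h.shortExact _ x hx

theorem connecting_injective (h : IsShortExact f g) [Subsingleton (ModExt R i B Y)] :
    Function.Injective (h.connecting i Y) :=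
  (injective_iff_map_eq_zero _).2 fun x hx => by
    obtain ⟨y, rfl⟩ := (h.exact_extPull_connecting i Y x).1 hx
    rw [Subsingleton.elim y 0, map_zero]

theorem connecting_surjective (h : IsShortExact f g) [Subsingleton (ModExt R (i + 1) B Y)] :
    Function.Surjective (h.connecting i Y) := fun _ =>
  h.exists_connecting_eq (Subsingleton.elim _ _)

theorem subsingleton_ext_middle (h : IsShortExact f g) [Subsingleton (ModExt R i A Y)]
    [Subsingleton (ModExt R i C Y)] : Subsingleton (ModExt R i B Y) :=
  subsingleton_of_forall_eq 0 fun x => by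
    obtain ⟨y, rfl⟩ := h.exists_extPull_eq (x := x) (Subsingleton.elim _ _)
    rw [Subsingleton.elim y 0, map_zero]

/-- Dimension shifting along a surjection `B → C` with `B` projective. -/
def extShift (h : IsShortExact f g) [Module.Projective R B] (i : ℕ) (Y : Type u) [AddCommGroup Y]
    [Module R Y] : ModExt R (i + 1) A Y ≃ₗ[R] ModExt R (i + 2) C Y :=
  LinearEquiv.ofBijective (h.connecting (i + 1) Y)
    ⟨h.connecting_injective, h.connecting_surjective⟩

/-- The connecting map `Hom(A, Y) → Ext^1(C, Y)`. -/
def homConnecting (h : IsShortExact f g) (Y : Type u) [AddCommGroup Y] [Module R Y] :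
    (A →ₗ[R] Y) →ₗ[R] ModExt R 1 C Y :=
  h.connecting 0 Y ∘ₗ (homEquivExtZero A Y).toLinearMap

theorem exact_lcomp_homConnecting (h : IsShortExact f g) (Y : Type u) [AddCommGroup Y]
    [Module R Y] : Function.Exact (LinearMap.lcomp R Y f) (h.homConnecting Y) := fun a => by
  refine (h.exact_extPull_connecting 0 Y (Abelian.Ext.mk₀ (ModuleCat.ofHom a))).trans
    ⟨?_, ?_⟩
  · rintro ⟨y, hy⟩
    obtain ⟨b, rfl⟩ := (Abelian.Ext.mk₀_bijective _ _).2 y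
    refine ⟨b.hom, ?_⟩
    have hb := (Abelian.Ext.mk₀_bijective _ _).1 ((Abelian.Ext.mk₀_comp_mk₀ _ _).symm.trans hy)
    exact congrArg ModuleCat.Hom.hom hb
  · rintro ⟨b, rfl⟩
    exact ⟨Abelian.Ext.mk₀ (ModuleCat.ofHom b), Abelian.Ext.mk₀_comp_mk₀ _ _⟩

theorem homConnecting_surjective (h : IsShortExact f g) [Subsingleton (ModExt R 1 B Y)] :
    Function.Surjective (h.homConnecting Y) :=
  h.connecting_surjective.comp (homEquivExtZero A Y).surjective

/-- `Ext^1(C, Y)` is the cokernel of `Hom(B, Y) → Hom(A, Y)` if `Ext^1(B, Y) = 0`. -/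
def extOneEquiv (h : IsShortExact f g) (Y : Type u) [AddCommGroup Y] [Module R Y]
    [Subsingleton (ModExt R 1 B Y)] :
    ((A →ₗ[R] Y) ⧸ LinearMap.range (LinearMap.lcomp R Y f)) ≃ₗ[R] ModExt R 1 C Y :=
  Submodule.quotEquivOfEq _ _ (h.exact_lcomp_homConnecting Y).linearMap_ker_eq.symm ≪≫ₗ
    (h.homConnecting Y).quotKerEquivOfSurjective h.homConnecting_surjective

theorem subsingleton_ext_one_iff (h : IsShortExact f g) [Subsingleton (ModExt R 1 B Y)] :
    Subsingleton (ModExt R 1 C Y) ↔ Function.Surjective (LinearMap.lcomp R Y f) := by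
  rw [← (h.extOneEquiv Y).toEquiv.subsingleton_congr, Submodule.Quotient.subsingleton_iff,
    LinearMap.range_eq_top]

theorem lcomp_surjective (h : IsShortExact f g) [Subsingleton (ModExt R 1 C Y)] :
    Function.Surjective (LinearMap.lcomp R Y f) := fun a =>
  (h.exact_lcomp_homConnecting Y a).1 (Subsingleton.elim _ _)

end IsShortExact

end ShortExact

section Grade

theorem natCast_le_sInf_iff {p : ℕ → Prop} {n : ℕ} :
    (n : ℕ∞) ≤ sInf {a : ℕ∞ | ∃ k : ℕ, a = k ∧ p k} ↔ ∀ k < n, ¬ p k := by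
  rw [le_sInf_iff]
  constructor
  · intro h k hk hpk
    exact absurd (Nat.cast_le.1 (h k ⟨k, rfl, hpk⟩)) hk.not_ge
  · rintro h _ ⟨k, rfl, hpk⟩
    exact Nat.cast_le.2 (not_lt.1 fun hk => h k hk hpk)

theorem sInf_eq_natCast_iff {p : ℕ → Prop} {n : ℕ} :
    sInf {a : ℕ∞ | ∃ k : ℕ, a = k ∧ p k} = n ↔ p n ∧ ∀ k < n, ¬ p k := by
  constructor
  · intro h
    refine ⟨?_, natCast_le_sInf_iff.1 h.ge⟩
    have hsucc : ¬ ((n + 1 : ℕ) : ℕ∞) ≤ n := Nat.cast_le.not.2 n.not_succ_le_self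
    rw [← h, natCast_le_sInf_iff] at hsucc
    push Not at hsucc
    obtain ⟨k, hk, hpk⟩ := hsucc
    have hnk : n ≤ k := Nat.cast_le.1 (h.ge.trans (sInf_le ⟨k, rfl, hpk⟩))
    exact le_antisymm (Nat.lt_succ_iff.1 hk) hnk ▸ hpk
  · rintro ⟨hpn, hlt⟩
    exact le_antisymm (sInf_le ⟨n, rfl, hpn⟩) (natCast_le_sInf_iff.2 hlt)

/-- The grade `inf {i | Ext^i(X, N) ≠ 0}` of a pair of modules. For `X = R ⧸ I` it is the depth
of `N` along `I`, and for `N = R` it is the grade of `X`. -/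
def extGrade (R : Type u) [CommRing R] (X N : Type u) [AddCommGroup X] [Module R X]
    [AddCommGroup N] [Module R N] : ℕ∞ :=
  sInf {n : ℕ∞ | ∃ k : ℕ, n = k ∧ ¬ Subsingleton (ModExt R k X N)}

variable {R : Type u} [CommRing R] {i : ℕ}
  {A B C X Y : Type u} [AddCommGroup A] [Module R A] [AddCommGroup B] [Module R B]
  [AddCommGroup C] [Module R C] [AddCommGroup X] [Module R X] [AddCommGroup Y] [Module R Y]

theorem edepth_eq_extGrade (I : Ideal R) (N : Type u) [AddCommGroup N] [Module R N] :
    edepth R I N = extGrade R (R ⧸ I) N := by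
  simp only [edepth, extGrade, (extMEquiv _ (R ⧸ I) N).toEquiv.subsingleton_congr]

theorem natCast_le_extGrade_iff {n : ℕ} :
    (n : ℕ∞) ≤ extGrade R X A ↔ ∀ i < n, Subsingleton (ModExt R i X A) := by
  simp only [extGrade, natCast_le_sInf_iff, not_not]

theorem extGrade_eq_natCast_iff {n : ℕ} :
    extGrade R X A = n ↔
      ¬ Subsingleton (ModExt R n X A) ∧ ∀ i < n, Subsingleton (ModExt R i X A) := by
  simp only [extGrade, sInf_eq_natCast_iff, not_not]

theorem subsingleton_ext_of_lt_extGrade (h : (i : ℕ∞) < extGrade R X A) :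
    Subsingleton (ModExt R i X A) :=
  natCast_le_extGrade_iff.1 (Order.add_one_le_of_lt h) i i.lt_succ_self

theorem extGrade_le_of_not_subsingleton (h : ¬ Subsingleton (ModExt R i X A)) :
    extGrade R X A ≤ i :=
  not_lt.1 fun hlt => h (subsingleton_ext_of_lt_extGrade hlt)

theorem extGrade_le_extGrade_of_forall
    (h : ∀ i, Subsingleton (ModExt R i X A) → Subsingleton (ModExt R i X B)) :
    extGrade R X A ≤ extGrade R X B :=
  ENat.forall_natCast_le_iff_le.1 fun _ hn =>
    natCast_le_extGrade_iff.2 fun i hi => h i (natCast_le_extGrade_iff.1 hn i hi)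

theorem extGrade_congr (e : A ≃ₗ[R] B) : extGrade R X A = extGrade R X B :=
  le_antisymm (extGrade_le_extGrade_of_forall fun _ => (subsingleton_ext_congr_right e).1)
    (extGrade_le_extGrade_of_forall fun _ => (subsingleton_ext_congr_right e).2)

theorem extGrade_congr_left (e : A ≃ₗ[R] B) : extGrade R A Y = extGrade R B Y := by
  simp only [extGrade, subsingleton_ext_congr_left e]

namespace IsShortExact

variable {f : A →ₗ[R] B} {g : B →ₗ[R] C}

theorem min_le_extGrade_left (h : IsShortExact f g) :
    min (extGrade R X B) (extGrade R X C + 1) ≤ extGrade R X A := by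
  refine ENat.forall_natCast_le_iff_le.1 fun n hn => natCast_le_extGrade_iff.2 fun i hi => ?_
  obtain ⟨hB, hC⟩ := le_min_iff.1 hn
  have : Subsingleton (ModExt R i X B) := natCast_le_extGrade_iff.1 hB i hi
  cases i with
  | zero => exact h.extPush_injective_zero.subsingleton
  | succ i =>
    have hiC : ((i : ℕ∞) + 1) < extGrade R X C + 1 :=
      lt_of_lt_of_le (by exact_mod_cast hi) hC
    have := subsingleton_ext_of_lt_extGrade (lt_of_add_lt_add_right hiC)
    exact h.extPush_injective_succ.subsingleton

theorem extGrade_left_of_lt (h : IsShortExact f g) (hlt : extGrade R X C < extGrade R X B) :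
    extGrade R X A = extGrade R X C + 1 := by
  refine le_antisymm ?_ (le_trans (le_min (Order.add_one_le_of_lt hlt) le_rfl)
    h.min_le_extGrade_left)
  obtain ⟨c, hc⟩ := ENat.ne_top_iff_exists.1 hlt.ne_top
  have : Subsingleton (ModExt R c X B) := subsingleton_ext_of_lt_extGrade (hc ▸ hlt)
  rw [← hc]
  refine extGrade_le_of_not_subsingleton (i := c + 1) fun _ => ?_
  exact (extGrade_eq_natCast_iff.1 hc.symm).1 h.subsingleton_ext_right

theorem extGrade_right_of_lt (h : IsShortExact f g) (hlt : extGrade R X A < extGrade R X B) :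
    extGrade R X C + 1 = extGrade R X A := by
  have hle : extGrade R X C + 1 ≤ extGrade R X A :=
    (min_le_iff.1 h.min_le_extGrade_left).resolve_left hlt.not_ge
  exact (h.extGrade_left_of_lt
    (lt_of_le_of_lt (le_self_add.trans hle) hlt)).symm

end IsShortExact

theorem eq_zero_of_forall_extPush_eq_zero [Module.Finite R A] [Module.Free R A]
    {x : ModExt R i X A} (h : ∀ φ : A →ₗ[R] R, extPush i X A R φ x = 0) : x = 0 := by
  let b := Module.Free.chooseBasis R A
  have hid : (LinearMap.id : A →ₗ[R] A) =
      ∑ j, LinearMap.toSpanSingleton R A (b j) ∘ₗ b.coord j :=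
    LinearMap.ext fun a => by simp [b.sum_repr]
  rw [← extPush_id x, hid, map_sum, LinearMap.sum_apply]
  exact Finset.sum_eq_zero fun j _ => by rw [extPush_comp, h, map_zero]

theorem extGrade_self_le_of_free [Module.Finite R A] [Module.Free R A] :
    extGrade R X R ≤ extGrade R X A :=
  extGrade_le_extGrade_of_forall fun _ _ => subsingleton_of_forall_eq 0 fun _ =>
    eq_zero_of_forall_extPush_eq_zero fun _ => Subsingleton.elim _ _

end Grade

/-- `Y` is acyclic for the duality `Hom(-, R)`: `Ext^i(Y, R) = 0` for all `i > 0`. -/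
def IsDualAcyclic (R : Type u) [CommRing R] (Y : Type u) [AddCommGroup Y] [Module R Y] : Prop :=
  ∀ i, Subsingleton (ModExt R (i + 1) Y R)

section Duality

variable {R : Type u} [CommRing R]
  {A B C X Y : Type u} [AddCommGroup A] [Module R A] [AddCommGroup B] [Module R B]
  [AddCommGroup C] [Module R C] [AddCommGroup X] [Module R X] [AddCommGroup Y] [Module R Y]

theorem isDualAcyclic_of_projective [Module.Projective R A] : IsDualAcyclic R A :=
  fun _ => inferInstance

namespace IsShortExact

variable {f : A →ₗ[R] B} {g : B →ₗ[R] C}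

theorem dual (h : IsShortExact f g) [Subsingleton (ModExt R 1 C R)] :
    IsShortExact g.dualMap f.dualMap :=
  ⟨LinearMap.dualMap_injective_of_surjective h.surjective,
    LinearMap.exact_lcomp_of_exact_of_surjective R h.exact h.surjective, h.lcomp_surjective⟩

theorem isDualAcyclic_left (h : IsShortExact f g) (hB : IsDualAcyclic R B)
    (hC : IsDualAcyclic R C) : IsDualAcyclic R A := fun i =>
  have := hB i
  have := hC (i + 1)
  (h.connecting_injective (i := i + 1)).subsingleton

end IsShortExact

theorem extGrade_self_le_dual [IsNoetherianRing R] [Module.Finite R Y] (hY : IsDualAcyclic R Y) :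
    extGrade R X R ≤ extGrade R X (Module.Dual R Y) := by
  refine ENat.forall_natCast_le_iff_le.1 fun n hn => ?_
  induction n generalizing Y with
  | zero => exact zero_le
  | succ n ih =>
    obtain ⟨r, p, hp⟩ := Module.Finite.exists_fin' R Y
    have hker := isShortExact_ker_subtype hp
    have := hY 0
    have hgrade := ih (hker.isDualAcyclic_left isDualAcyclic_of_projective hY)
      (le_trans (by simp) hn)
    refine le_trans (le_min (hn.trans extGrade_self_le_of_free) ?_) hker.dual.min_le_extGrade_left
    exact add_le_add_left hgrade 1

end Duality

section Dimension

open IsLocalRing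
open scoped Pointwise

variable {R : Type u} [CommRing R] {A E N : Type u} [AddCommGroup A] [Module R A]
  [AddCommGroup E] [Module R E] [AddCommGroup N] [Module R N]

theorem isShortExact_lsmul_mkQ {x : R} (hx : IsSMulRegular N x) :
    IsShortExact (LinearMap.lsmul R N x) (x • (⊤ : Submodule R N)).mkQ :=
  ⟨hx, LinearMap.exact_iff.2 <| by
    ext; simp [Submodule.mem_smul_pointwise_iff_exists], Submodule.mkQ_surjective _⟩

theorem natCast_le_extGrade_quotSMulTop {n : ℕ} {x : R} (hx : IsSMulRegular N x)
    (h : ((n + 1 : ℕ) : ℕ∞) ≤ extGrade R A N) : (n : ℕ∞) ≤ extGrade R A (QuotSMulTop x N) := by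
  rw [natCast_le_extGrade_iff] at h ⊢
  intro i hi
  have := h i (hi.trans n.lt_succ_self)
  have := h (i + 1) (Nat.succ_lt_succ hi)
  exact (isShortExact_lsmul_mkQ hx).subsingleton_ext_right

variable [IsLocalRing R]

theorem annihilator_le_maximalIdeal [Nontrivial E] :
    Module.annihilator R E ≤ maximalIdeal R :=
  le_maximalIdeal fun h => not_subsingleton E (Module.annihilator_eq_top_iff.1 h)

theorem support_residue_subset_support [Module.Finite R E] [Nontrivial E] :
    Module.support R (R ⧸ maximalIdeal R) ⊆ Module.support R E := by
  rw [Module.support_eq_zeroLocus, Module.support_eq_zeroLocus, Ideal.annihilator_quotient]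
  exact PrimeSpectrum.zeroLocus_anti_mono annihilator_le_maximalIdeal

variable [IsNoetherianRing R] [Module.Finite R E] [Nontrivial E]

-- If `n > 0`, then `Hom(E, N) = 0` provides an `N`-regular element of `Ann E`, and dividing `N` by
-- it lowers both `n` and `dim N` by one.
theorem supportDim_add_le_of_natCast_le_extGrade [Module.Finite R N] {n : ℕ}
    (hsupp : Module.support R E ⊆ Module.support R N) (hn : (n : ℕ∞) ≤ extGrade R E N) :
    Module.supportDim R E + n ≤ Module.supportDim R N := by
  induction n generalizing N with
  | zero =>
    rw [Nat.cast_zero, add_zero]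
    exact Order.krullDim_le_of_strictMono (Set.inclusion hsupp) fun _ _ h => h
  | succ n ih =>
    have hhom : Subsingleton (E →ₗ[R] N) :=
      subsingleton_ext_zero_iff.1 (natCast_le_extGrade_iff.1 hn 0 n.succ_pos)
    obtain ⟨x, hx, hreg⟩ := IsSMulRegular.subsingleton_linearMap_iff.1 hhom
    have hsupp' : Module.support R E ⊆ Module.support R (QuotSMulTop x N) := by
      rw [Module.support_quotSMulTop]
      refine Set.subset_inter hsupp ?_
      rw [Module.support_eq_zeroLocus]
      exact PrimeSpectrum.zeroLocus_anti_mono (Set.singleton_subset_iff.2 hx)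
    calc Module.supportDim R E + (n + 1 : ℕ)
        = Module.supportDim R E + n + 1 := by rw [Nat.cast_add, Nat.cast_one, add_assoc]
      _ ≤ Module.supportDim R (QuotSMulTop x N) + 1 := by
          gcongr
          exact ih hsupp' (natCast_le_extGrade_quotSMulTop hreg hn)
      _ = Module.supportDim R N :=
          Module.supportDim_quotSMulTop_succ_eq_supportDim hreg (annihilator_le_maximalIdeal hx)

theorem extGrade_residue_add_le {d n : ℕ} (hdim : ringKrullDim R = ((d : ℕ∞) : WithBot ℕ∞))
    (hn : (n : ℕ∞) ≤ extGrade R E R) : extGrade R (R ⧸ maximalIdeal R) E + n ≤ d := by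
  have hE : Module.supportDim R E + n ≤ d := by
    have hsupp : Module.support R E ⊆ Module.support R R := by
      simp [Module.support_eq_zeroLocus, Module.annihilator_eq_bot.2 inferInstance]
    have hle := supportDim_add_le_of_natCast_le_extGrade hsupp hn
    rwa [Module.supportDim_self_eq_ringKrullDim, hdim] at hle
  have hresidue : (0 : WithBot ℕ∞) ≤ Module.supportDim R (R ⧸ maximalIdeal R) :=
    have : Nonempty (Module.support R (R ⧸ maximalIdeal R)) :=
      (Module.nonempty_support_of_nontrivial (R := R)).to_subtype
    Order.krullDim_nonneg
  have hbound : ∀ t : ℕ, (t : ℕ∞) ≤ extGrade R (R ⧸ maximalIdeal R) E → t + n ≤ d := by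
    intro t ht
    have hle := supportDim_add_le_of_natCast_le_extGrade support_residue_subset_support ht
    have hsum : (t : WithBot ℕ∞) + n ≤ d := by
      calc (t : WithBot ℕ∞) + n = 0 + t + n := by rw [zero_add]
        _ ≤ Module.supportDim R (R ⧸ maximalIdeal R) + t + n := by gcongr
        _ ≤ Module.supportDim R E + n := by gcongr
        _ ≤ d := hE
    exact_mod_cast hsum
  have hnd : n ≤ d := by simpa using hbound 0 zero_le
  have hle : extGrade R (R ⧸ maximalIdeal R) E ≤ (d - n : ℕ) :=
    ENat.forall_natCast_le_iff_le.1 fun t ht => Nat.cast_le.2 (Nat.le_sub_of_add_le (hbound t ht))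
  calc extGrade R (R ⧸ maximalIdeal R) E + n ≤ (d - n : ℕ) + n := by gcongr
    _ = d := by rw [← Nat.cast_add, Nat.sub_add_cancel hnd]

end Dimension

section Kernels

variable {R : Type u} [CommRing R]
  {A B C : Type u} [AddCommGroup A] [Module R A] [AddCommGroup B] [Module R B]
  [AddCommGroup C] [Module R C]

/-- The first term of a short exact sequence is the kernel of the second map. -/
def IsShortExact.equivKer {f : A →ₗ[R] B} {g : B →ₗ[R] C} (h : IsShortExact f g) :
    A ≃ₗ[R] LinearMap.ker g :=
  LinearEquiv.ofInjective f h.injective ≪≫ₗ LinearEquiv.ofEq _ _ h.exact.linearMap_ker_eq.symm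

theorem isShortExact_inclusion_restrict_ker {f : A →ₗ[R] B} (g : B →ₗ[R] C)
    (hf : Function.Surjective f) :
    IsShortExact (Submodule.inclusion (LinearMap.ker_le_ker_comp f g))
      (f.restrict (p := LinearMap.ker (g ∘ₗ f)) (q := LinearMap.ker g) fun _ hx => hx) where
  injective := Submodule.inclusion_injective _
  exact x := by
    refine ⟨fun hx => ⟨⟨x, congrArg Subtype.val hx⟩, rfl⟩, ?_⟩
    rintro ⟨y, rfl⟩
    exact Subtype.ext y.2
  surjective := by
    rintro ⟨b, hb⟩
    obtain ⟨a, rfl⟩ := hf b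
    exact ⟨⟨a, hb⟩, rfl⟩

theorem isShortExact_inl_prodMap {f : A →ₗ[R] C} (hf : Function.Surjective f) :
    IsShortExact (LinearMap.inl R A B ∘ₗ (LinearMap.ker f).subtype)
      (f.prodMap (LinearMap.id : B →ₗ[R] B)) where
  injective := LinearMap.inl_injective.comp (LinearMap.ker f).injective_subtype
  exact x := by
    refine ⟨fun hx => ⟨⟨x.1, congrArg Prod.fst hx⟩, ?_⟩, ?_⟩
    · exact Prod.ext rfl (congrArg Prod.snd hx).symm
    · rintro ⟨y, rfl⟩
      exact Prod.ext y.2 rfl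
  surjective := hf.prodMap Function.surjective_id

theorem isShortExact_schanuel {f : A →ₗ[R] C} {p : B →ₗ[R] C} {q : B →ₗ[R] A}
    (hp : Function.Surjective p) (hq : f ∘ₗ q = p) :
    IsShortExact
      (((-q).restrict (p := LinearMap.ker p) (q := LinearMap.ker f) fun b hb => by
        simpa [← hq] using hb).prod (LinearMap.ker p).subtype)
      ((LinearMap.ker f).subtype.coprod q) where
  injective _ _ hxy := Subtype.ext (congrArg Prod.snd hxy)
  exact := by
    rintro ⟨⟨a, ha⟩, b⟩
    constructor
    · intro hab
      obtain rfl : a = -q b := eq_neg_of_add_eq_zero_left hab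
      exact ⟨⟨b, by simpa [← hq] using ha⟩, rfl⟩
    · rintro ⟨z, hz⟩
      simp [← hz]
  surjective a := by
    obtain ⟨b, hb⟩ := hp (f a)
    have hab : a - q b ∈ LinearMap.ker f := by simp [← hb, ← hq]
    exact ⟨(⟨a - q b, hab⟩, b), sub_add_cancel a (q b)⟩

end Kernels

section GDimZero

variable {R : Type u} [CommRing R]
  {A B C : Type u} [AddCommGroup A] [Module R A] [AddCommGroup B] [Module R B]
  [AddCommGroup C] [Module R C]

theorem isDualAcyclic_iff :
    IsDualAcyclic R A ↔ ∀ i : ℕ, 0 < i → Subsingleton (extM R i A R) := by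
  simp only [(extMEquiv _ A R).toEquiv.subsingleton_congr]
  exact ⟨fun h i hi => Nat.sub_add_cancel hi ▸ h (i - 1), fun h i => h (i + 1) i.succ_pos⟩

theorem isGDimZero_iff :
    IsGDimZero R A ↔ Module.Finite R A ∧ Function.Bijective (Module.Dual.eval R A) ∧
      IsDualAcyclic R A ∧ IsDualAcyclic R (Module.Dual R A) := by
  simp only [IsGDimZero, isDualAcyclic_iff]

theorem isGDimZero_of_projective [Module.Finite R A] [Module.Projective R A] : IsGDimZero R A :=
  isGDimZero_iff.2 ⟨inferInstance, Module.bijective_dual_eval R A, isDualAcyclic_of_projective,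
    isDualAcyclic_of_projective⟩

namespace IsShortExact

variable {f : A →ₗ[R] B} {g : B →ₗ[R] C}

theorem isDualAcyclic_dual_left (h : IsShortExact f g) [Subsingleton (ModExt R 1 C R)]
    (hC : Function.Surjective (Module.Dual.eval R C)) (hB' : IsDualAcyclic R (Module.Dual R B))
    (hC' : IsDualAcyclic R (Module.Dual R C)) : IsDualAcyclic R (Module.Dual R A)
  | 0 => by
    have := hB' 0
    refine h.dual.subsingleton_ext_one_iff.2 fun γ => ?_
    obtain ⟨b, rfl⟩ := (hC.comp h.surjective) γ
    exact ⟨Module.Dual.eval R B b, rfl⟩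
  | i + 1 =>
    have := hB' (i + 1)
    have := hC' i
    (h.dual.connecting_surjective (i := i + 1)).subsingleton

theorem isGDimZero_left [IsNoetherianRing R] (h : IsShortExact f g) (hB : IsGDimZero R B)
    (hC : IsGDimZero R C) : IsGDimZero R A := by
  rw [isGDimZero_iff] at *
  obtain ⟨_, hevalB, hB, hB'⟩ := hB
  obtain ⟨_, hevalC, hC, hC'⟩ := hC
  have := hC 0
  have hfB : Function.Injective f.dualMap.dualMap :=
    LinearMap.dualMap_injective_of_surjective h.dual.surjective
  refine ⟨Module.Finite.of_injective f h.injective, ?_, h.isDualAcyclic_left hB hC,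
    h.isDualAcyclic_dual_left hevalC.2 hB' hC'⟩
  exact LinearMap.bijective_of_bijective_of_injective_of_left_exact f g f.dualMap.dualMap
    g.dualMap.dualMap _ _ _ (Module.Dual.eval_naturality f) (Module.Dual.eval_naturality g)
    h.exact
    (LinearMap.exact_lcomp_of_exact_of_surjective R h.dual.exact h.dual.surjective)
    hevalB hevalC.1 h.injective hfB

theorem isGDimZero_middle [Module.Finite R B] (h : IsShortExact f g) (hA : IsGDimZero R A)
    (hC : IsGDimZero R C) : IsGDimZero R B := by
  rw [isGDimZero_iff] at *
  obtain ⟨_, hevalA, hA, hA'⟩ := hA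
  obtain ⟨_, hevalC, hC, hC'⟩ := hC
  have := hC 0
  have := hA' 0
  have hbidual := h.dual.dual
  refine ⟨inferInstance, ?_, fun i => ?_, fun i => ?_⟩
  · exact LinearMap.bijective_of_surjective_of_bijective_of_bijective_of_injective
      (0 : PUnit.{1} →ₗ[R] A) f g (0 : C →ₗ[R] PUnit.{1}) (0 : PUnit.{1} →ₗ[R] _)
      f.dualMap.dualMap g.dualMap.dualMap (0 : _ →ₗ[R] PUnit.{1})
      LinearMap.id _ _ _ LinearMap.id (by simp) (Module.Dual.eval_naturality f)
      (Module.Dual.eval_naturality g) (by simp)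
      ((LinearMap.exact_zero_iff_injective _ _).2 h.injective) h.exact
      ((LinearMap.exact_zero_iff_surjective _ _).2 h.surjective)
      ((LinearMap.exact_zero_iff_injective _ _).2 hbidual.injective) hbidual.exact
      ((LinearMap.exact_zero_iff_surjective _ _).2 hbidual.surjective)
      Function.surjective_id hevalA hevalC Function.injective_id
  · have := hA i
    have := hC i
    exact h.subsingleton_ext_middle
  · have := hA' i
    have := hC' i
    exact h.dual.subsingleton_ext_middle

end IsShortExact

theorem isGDimZero_prod [Module.Finite R B] [Module.Projective R B] (hA : IsGDimZero R A) :
    IsGDimZero R (A × B) :=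
  have h : IsShortExact (LinearMap.inl R A B) (LinearMap.snd R A B) :=
    ⟨LinearMap.inl_injective, Function.Exact.inl_snd, LinearMap.snd_surjective⟩
  have := hA.1
  h.isGDimZero_middle hA isGDimZero_of_projective

end GDimZero

section GDim

variable {R : Type u} [CommRing R] [IsNoetherianRing R] {m : ℕ}
  {A B C : Type u} [AddCommGroup A] [Module R A] [AddCommGroup B] [Module R B]
  [AddCommGroup C] [Module R C]

theorem isGDimZero_congr (e : A ≃ₗ[R] B) (hB : IsGDimZero R B) : IsGDimZero R A :=
  have h : IsShortExact e.toLinearMap (0 : B →ₗ[R] PUnit.{u + 1}) :=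
    ⟨e.injective, (LinearMap.exact_zero_iff_surjective _ _).2 e.surjective,
      Function.surjective_to_subsingleton _⟩
  h.isGDimZero_left hB isGDimZero_of_projective

theorem gDimLE_congr (e : A ≃ₗ[R] B) (hB : GDimLE R m (ModuleCat.of R B)) :
    GDimLE R m (ModuleCat.of R A) := by
  cases m with
  | zero => exact isGDimZero_congr e hB
  | succ m =>
    obtain ⟨G, f, hG, hf, hker⟩ := hB
    refine ⟨G, e.symm.toLinearMap ∘ₗ f, hG, e.symm.surjective.comp hf, ?_⟩
    rwa [LinearEquiv.ker_comp]

namespace IsShortExact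

variable {f : A →ₗ[R] B} {g : B →ₗ[R] C}

theorem gDimLE_succ (h : IsShortExact f g) (hA : GDimLE R m (ModuleCat.of R A))
    (hB : IsGDimZero R B) : GDimLE R (m + 1) (ModuleCat.of R C) :=
  ⟨ModuleCat.of R B, g, hB, h.surjective, gDimLE_congr h.equivKer.symm hA⟩

end IsShortExact

theorem gDimLE_ker {g : B →ₗ[R] C} (hg : Function.Surjective g)
    (hB : GDimLE R m (ModuleCat.of R B)) (hC : IsGDimZero R C) :
    GDimLE R m (ModuleCat.of R (LinearMap.ker g)) := by
  cases m with
  | zero => exact (isShortExact_ker_subtype hg).isGDimZero_left hB hC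
  | succ m =>
    obtain ⟨G, f, hG, hf, hker⟩ := hB
    exact (isShortExact_inclusion_restrict_ker g hf).gDimLE_succ hker
      ((isShortExact_ker_subtype (g := g ∘ₗ f) (hg.comp hf)).isGDimZero_left hG hC)

theorem gDimLE_prod [Module.Finite R B] [Module.Projective R B]
    (hA : GDimLE R m (ModuleCat.of R A)) : GDimLE R m (ModuleCat.of R (A × B)) := by
  cases m with
  | zero => exact isGDimZero_prod hA
  | succ m =>
    obtain ⟨G, f, hG, hf, hker⟩ := hA
    exact (isShortExact_inl_prodMap hf).gDimLE_succ hker (isGDimZero_prod hG)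

theorem gDimLE_ker_of_projective [Module.Finite R B] [Module.Projective R B] {p : B →ₗ[R] A}
    (hp : Function.Surjective p) (hA : GDimLE R (m + 1) (ModuleCat.of R A)) :
    GDimLE R m (ModuleCat.of R (LinearMap.ker p)) := by
  obtain ⟨G, f, hG, hf, hker⟩ := hA
  obtain ⟨q, hq⟩ := Module.projective_lifting_property f p hf
  have h := isShortExact_schanuel hp hq
  exact gDimLE_congr h.equivKer (gDimLE_ker h.surjective (gDimLE_prod hker) hG)

end GDim

theorem IsShortExact.extPush_injective_of_le {R A B C X : Type u} [CommRing R] [AddCommGroup A]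
    [Module R A] [AddCommGroup B] [Module R B] [AddCommGroup C] [Module R C] [AddCommGroup X]
    [Module R X] {f : A →ₗ[R] B} {g : B →ₗ[R] C} (h : IsShortExact f g) {d : ℕ}
    (hd : (d : ℕ∞) ≤ extGrade R X C) : Function.Injective (extPush d X A B f) := by
  cases d with
  | zero => exact h.extPush_injective_zero
  | succ d =>
    have := natCast_le_extGrade_iff.1 hd d d.lt_succ_self
    exact h.extPush_injective_succ

section ExtDual

variable {R : Type u} [CommRing R] {d : ℕ}
  {A X Y : Type u} [AddCommGroup A] [Module R A] [AddCommGroup X] [Module R X]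
  [AddCommGroup Y] [Module R Y]

/-- The natural map `Ext^d(X, Y*) → Hom(Y, Ext^d(X, R))`, which pushes a class forward along the
evaluations `Y* → R`. -/
def extDualEval (d : ℕ) (X Y : Type u) [AddCommGroup X] [Module R X] [AddCommGroup Y]
    [Module R Y] : ModExt R d X (Module.Dual R Y) →ₗ[R] Y →ₗ[R] ModExt R d X R :=
  (extPush d X (Module.Dual R Y) R ∘ₗ Module.Dual.eval R Y).flip

theorem extDualEval_apply (x : ModExt R d X (Module.Dual R Y)) (y : Y) :
    extDualEval d X Y x y = extPush d X (Module.Dual R Y) R (Module.Dual.eval R Y y) x :=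
  rfl

theorem extDualEval_extPush (p : A →ₗ[R] Y) (x : ModExt R d X (Module.Dual R Y)) :
    extDualEval d X A (extPush d X _ _ p.dualMap x) = extDualEval d X Y x ∘ₗ p :=
  LinearMap.ext fun _ => (extPush_comp p.dualMap _ x).symm

section Free

variable [Module.Finite R A] [Module.Free R A]

theorem extDualEval_injective_of_free : Function.Injective (extDualEval (R := R) d X A) := by
  refine (injective_iff_map_eq_zero _).2 fun x hx =>
    eq_zero_of_forall_extPush_eq_zero fun φ => ?_
  obtain ⟨a, rfl⟩ := (Module.bijective_dual_eval R A).2 φ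
  exact LinearMap.congr_fun hx a

theorem extDualEval_surjective_of_free : Function.Surjective (extDualEval (R := R) d X A) := by
  intro G
  let b := Module.Free.chooseBasis R A
  have heval : ∀ l j, Module.Dual.eval R A (b l) ∘ₗ LinearMap.toSpanSingleton R _ (b.coord j) =
      b.coord j (b l) • LinearMap.id := fun l j => by ext; simp
  refine ⟨∑ j, extPush d X R _ (LinearMap.toSpanSingleton R _ (b.coord j)) (G (b j)),
    b.ext fun l => ?_⟩
  calc _ = ∑ j, b.coord j (b l) • G (b j) := by
        simp only [map_sum, LinearMap.sum_apply, extDualEval_apply, ← extPush_comp, heval,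
          map_smul, LinearMap.smul_apply, extPush_id]
    _ = G (b l) := by simp [Finsupp.single_apply]

end Free

variable [IsNoetherianRing R] [Module.Finite R Y]

theorem extDualEval_injective (hd : (d : ℕ∞) ≤ extGrade R X R) (hY : IsDualAcyclic R Y) :
    Function.Injective (extDualEval (R := R) d X Y) := by
  obtain ⟨r, p, hp⟩ := Module.Finite.exists_fin' R Y
  have hker := isShortExact_ker_subtype hp
  have := hY 0
  have hgrade : (d : ℕ∞) ≤ extGrade R X (Module.Dual R (LinearMap.ker p)) :=
    hd.trans (extGrade_self_le_dual (hker.isDualAcyclic_left isDualAcyclic_of_projective hY))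
  refine (injective_iff_map_eq_zero _).2 fun x hx => ?_
  refine (injective_iff_map_eq_zero _).1 (hker.dual.extPush_injective_of_le hgrade) x ?_
  refine (injective_iff_map_eq_zero _).1 extDualEval_injective_of_free _ ?_
  rw [extDualEval_extPush, hx, LinearMap.zero_comp]

theorem extDualEval_surjective (hd : (d : ℕ∞) ≤ extGrade R X R) (hY : IsDualAcyclic R Y) :
    Function.Surjective (extDualEval (R := R) d X Y) := by
  intro G
  obtain ⟨r, p, hp⟩ := Module.Finite.exists_fin' R Y
  have hker := isShortExact_ker_subtype hp
  have := hY 0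
  obtain ⟨z, hz⟩ := extDualEval_surjective_of_free (G ∘ₗ p)
  have hz_ker : extPush d X _ _ (LinearMap.ker p).subtype.dualMap z = 0 := by
    refine (injective_iff_map_eq_zero _).1 (extDualEval_injective hd
      (hker.isDualAcyclic_left isDualAcyclic_of_projective hY)) _ ?_
    rw [extDualEval_extPush, hz, LinearMap.comp_assoc, hker.exact.linearMap_comp_eq_zero,
      LinearMap.comp_zero]
  obtain ⟨x, rfl⟩ := (hker.dual.exact_extPush d X z).1 hz_ker
  refine ⟨x, LinearMap.cancel_right hp |>.1 ?_⟩
  rw [← extDualEval_extPush, hz]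

end ExtDual

section Residue

variable {R : Type u} [CommRing R] {d : ℕ}

theorem smul_ext_quotient_eq_zero {N : Type u} [AddCommGroup N] [Module R N] {I : Ideal R} {r : R}
    (hr : r ∈ I) (x : ModExt R d (R ⧸ I) N) : r • x = 0 := by
  have hid : r • 𝟙 (ModuleCat.of R (R ⧸ I)) = 0 := by
    refine ModuleCat.hom_ext (LinearMap.ext fun y => ?_)
    have hr : r ∈ Module.annihilator R (R ⧸ I) := by rwa [Ideal.annihilator_quotient]
    exact Module.mem_annihilator.1 hr y
  rw [← Abelian.Ext.mk₀_id_comp x, ← Abelian.Ext.smul_comp, ← Abelian.Ext.mk₀_smul, hid,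
    Abelian.Ext.mk₀_zero, Abelian.Ext.zero_comp]

open IsLocalRing

variable [IsLocalRing R]

theorem exists_surjective_residue (E : Type u) [AddCommGroup E] [Module R E] [Module.Finite R E]
    [Nontrivial E] : ∃ φ : E →ₗ[R] R ⧸ maximalIdeal R, Function.Surjective φ := by
  obtain ⟨N, hN, _⟩ := (eq_top_or_exists_le_coatom (⊥ : Submodule R E)).resolve_left bot_ne_top
  obtain ⟨I, hI, ⟨e⟩⟩ := isSimpleModule_iff_quot_maximal.1 (isSimpleModule_iff_isCoatom.2 hN)
  obtain rfl := eq_maximalIdeal hI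
  exact ⟨e.toLinearMap ∘ₗ N.mkQ, e.surjective.comp N.mkQ_surjective⟩

theorem exists_linearMap_ne_zero {E V : Type u} [AddCommGroup E] [Module R E] [Module.Finite R E]
    [Nontrivial E] [AddCommGroup V] [Module R V] [Nontrivial V]
    (hV : ∀ r ∈ maximalIdeal R, ∀ v : V, r • v = 0) : ∃ φ : E →ₗ[R] V, φ ≠ 0 := by
  obtain ⟨π, hπ⟩ := exists_surjective_residue (R := R) E
  obtain ⟨v, hv⟩ := exists_ne (0 : V)
  let ι : (R ⧸ maximalIdeal R) →ₗ[R] V :=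
    Submodule.liftQ _ (LinearMap.toSpanSingleton R V v) fun r hr => hV r hr v
  refine ⟨ι ∘ₗ π, fun h => hv ?_⟩
  obtain ⟨e, he⟩ := hπ (Submodule.Quotient.mk 1)
  have hι : ι (π e) = v := he ▸ one_smul R v
  exact hι.symm.trans (LinearMap.congr_fun h e)

end Residue

section KeySurjectivity

variable {R : Type u} [CommRing R] [IsNoetherianRing R] {d : ℕ}
  {X Z P C : Type u} [AddCommGroup X] [Module R X] [AddCommGroup Z] [Module R Z] [AddCommGroup P]
  [Module R P] [AddCommGroup C] [Module R C]

theorem exists_forall_extPush_eq (hd : (d : ℕ∞) ≤ extGrade R X R) (hZ : IsGDimZero R Z)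
    (G : Module.Dual R Z →ₗ[R] ModExt R d X R) :
    ∃ z : ModExt R d X Z, ∀ φ : Module.Dual R Z, extPush d X Z R φ z = G φ := by
  obtain ⟨_, heval, -, hZ'⟩ := isGDimZero_iff.1 hZ
  obtain ⟨x, rfl⟩ := extDualEval_surjective hd hZ' G
  let e := LinearEquiv.ofBijective _ heval
  refine ⟨extPush d X _ _ e.symm.toLinearMap x, fun φ => ?_⟩
  have hφ : φ ∘ₗ e.symm.toLinearMap = Module.Dual.eval R (Module.Dual R Z) φ := by
    refine (LinearMap.cancel_right e.surjective).1 (LinearMap.ext fun z => ?_)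
    exact congrArg φ (e.symm_apply_apply z)
  rw [← extPush_comp, hφ, extDualEval_apply]

theorem IsShortExact.eq_zero_of_comp_dualMap_eq_zero [Module.Finite R P] [Module.Free R P]
    {f : Z →ₗ[R] P} {g : P →ₗ[R] C} (h : IsShortExact f g) (hZ : IsGDimZero R Z)
    (hR : (d : ℕ∞) ≤ extGrade R X R) (hC : (d : ℕ∞) ≤ extGrade R X C)
    {G : Module.Dual R Z →ₗ[R] ModExt R d X R} (hG : G ∘ₗ f.dualMap = 0) : G = 0 := by
  obtain ⟨z, hz⟩ := exists_forall_extPush_eq hR hZ G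
  have hz0 : z = 0 := by
    refine (injective_iff_map_eq_zero _).1 (h.extPush_injective_of_le hC) z ?_
    refine eq_zero_of_forall_extPush_eq_zero fun ψ => ?_
    rw [← extPush_comp]
    exact (hz (f.dualMap ψ)).trans (LinearMap.congr_fun hG ψ)
  exact LinearMap.ext fun φ => by rw [← hz, hz0, map_zero, LinearMap.zero_apply]

theorem IsShortExact.dualMap_surjective_of_le_extGrade [IsLocalRing R] [Module.Finite R P]
    [Module.Free R P] {f : Z →ₗ[R] P} {g : P →ₗ[R] C} (h : IsShortExact f g)
    (hZ : IsGDimZero R Z) (hR : extGrade R (R ⧸ IsLocalRing.maximalIdeal R) R = d)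
    (hC : (d : ℕ∞) ≤ extGrade R (R ⧸ IsLocalRing.maximalIdeal R) C) :
    Function.Surjective f.dualMap := by
  have := hZ.1
  rw [← LinearMap.range_eq_top]
  by_contra hne
  have : Nontrivial (Module.Dual R Z ⧸ LinearMap.range f.dualMap) :=
    Submodule.Quotient.nontrivial_iff.2 hne
  have : Nontrivial (ModExt R d (R ⧸ IsLocalRing.maximalIdeal R) R) :=
    not_subsingleton_iff_nontrivial.1 (extGrade_eq_natCast_iff.1 hR).1
  obtain ⟨G, hG⟩ := exists_linearMap_ne_zero
    (E := Module.Dual R Z ⧸ LinearMap.range f.dualMap)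
    (V := ModExt R d (R ⧸ IsLocalRing.maximalIdeal R) R)
    fun _ hr => smul_ext_quotient_eq_zero hr
  refine hG (Submodule.linearMap_qext _ ?_)
  refine h.eq_zero_of_comp_dualMap_eq_zero hZ hR.ge hC ?_
  rw [LinearMap.comp_assoc, LinearMap.range_mkQ_comp, LinearMap.comp_zero]

end KeySurjectivity

section AuslanderBridger

open IsLocalRing

variable {R : Type u} [CommRing R] [IsNoetherianRing R]

theorem IsShortExact.gDimLE_left {m : ℕ} {A B C : Type u} [AddCommGroup A] [Module R A]
    [AddCommGroup B] [Module R B] [AddCommGroup C] [Module R C] {f : A →ₗ[R] B} {g : B →ₗ[R] C}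
    [Module.Finite R B] [Module.Projective R B] (h : IsShortExact f g)
    (hC : GDimLE R (m + 1) (ModuleCat.of R C)) : GDimLE R m (ModuleCat.of R A) :=
  gDimLE_congr h.equivKer (gDimLE_ker_of_projective h.surjective hC)

theorem extGrade_self_le_of_isGDimZero {X Z : Type u} [AddCommGroup X] [Module R X]
    [AddCommGroup Z] [Module R Z] (hZ : IsGDimZero R Z) : extGrade R X R ≤ extGrade R X Z := by
  obtain ⟨_, heval, -, hZ'⟩ := isGDimZero_iff.1 hZ
  rw [extGrade_congr (LinearEquiv.ofBijective _ heval)]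
  exact extGrade_self_le_dual hZ'

variable [IsLocalRing R] {d : ℕ} {Z P M : Type u} [AddCommGroup Z] [Module R Z] [AddCommGroup P]
  [Module R P] [AddCommGroup M] [Module R M]

theorem IsShortExact.extGrade_residue_add_one_eq [Module.Finite R P] [Module.Free R P]
    {f : Z →ₗ[R] P} {g : P →ₗ[R] M} (h : IsShortExact f g) (hZ : IsGDimZero R Z)
    (hR : extGrade R (R ⧸ maximalIdeal R) R = d) (hM : ¬ Subsingleton (ModExt R 1 M R)) :
    extGrade R (R ⧸ maximalIdeal R) M + 1 = d := by
  have hlt : extGrade R (R ⧸ maximalIdeal R) M < d := not_le.1 fun hle =>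
    hM (h.subsingleton_ext_one_iff.2 (h.dualMap_surjective_of_le_extGrade hZ hR hle))
  refine le_antisymm (Order.add_one_le_of_lt hlt) ?_
  rw [← h.extGrade_left_of_lt (hlt.trans_le (hR.ge.trans extGrade_self_le_of_free)), ← hR]
  exact extGrade_self_le_of_isGDimZero hZ

theorem extGrade_residue_add_eq_of_gDimLE [Module.Finite R M] {n : ℕ}
    (hR : extGrade R (R ⧸ maximalIdeal R) R = d) (hG : GDimLE R (n + 1) (ModuleCat.of R M))
    (hM : ¬ Subsingleton (ModExt R (n + 1) M R)) :
    extGrade R (R ⧸ maximalIdeal R) M + (n + 1 : ℕ) = d := by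
  induction n generalizing M with
  | zero =>
    obtain ⟨r, p, hp⟩ := Module.Finite.exists_fin' R M
    have h := isShortExact_ker_subtype hp
    exact h.extGrade_residue_add_one_eq (h.gDimLE_left hG) hR hM
  | succ n ih =>
    obtain ⟨r, p, hp⟩ := Module.Finite.exists_fin' R M
    have h := isShortExact_ker_subtype hp
    have hker := ih (h.gDimLE_left hG) (by rwa [(h.extShift n R).toEquiv.subsingleton_congr])
    have hlt : extGrade R (R ⧸ maximalIdeal R) (LinearMap.ker p) < d := by
      have hne : extGrade R (R ⧸ maximalIdeal R) (LinearMap.ker p) ≠ ⊤ := by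
        rintro htop
        simp [htop] at hker
      rw [← hker, add_comm]
      exact ENat.lt_add_left hne (by simp)
    rw [← hker, ← h.extGrade_right_of_lt (hlt.trans_le (hR.ge.trans extGrade_self_le_of_free))]
    push_cast
    ring

end AuslanderBridger

section DualImage

variable {R : Type u} [CommRing R]
  {Z P M : Type u} [AddCommGroup Z] [Module R Z] [AddCommGroup P] [Module R P]
  [AddCommGroup M] [Module R M]

/-- The image of `Hom(B, R) → Hom(A, R)` does not change if `A` is replaced by a module that
surjects onto it. -/
def rangeDualMapCompEquiv {A B C : Type u} [AddCommGroup A] [Module R A] [AddCommGroup B]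
    [Module R B] [AddCommGroup C] [Module R C] (q : C →ₗ[R] A) (hq : Function.Surjective q)
    (f : A →ₗ[R] B) :
    LinearMap.range f.dualMap ≃ₗ[R] LinearMap.range (f ∘ₗ q).dualMap :=
  Submodule.equivMapOfInjective q.dualMap (LinearMap.dualMap_injective_of_surjective hq) _ ≪≫ₗ
    LinearEquiv.ofEq _ _ (by rw [← LinearMap.dualMap_comp_dualMap, LinearMap.range_comp])

namespace IsShortExact

variable {f : Z →ₗ[R] P} {g : P →ₗ[R] M}

theorem dual_rangeRestrict (h : IsShortExact f g) :
    IsShortExact (C := LinearMap.range f.dualMap) g.dualMap f.dualMap.rangeRestrict where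
  injective := LinearMap.dualMap_injective_of_surjective h.surjective
  exact := by
    rw [LinearMap.exact_iff, LinearMap.ker_rangeRestrict]
    exact (LinearMap.exact_lcomp_of_exact_of_surjective R h.exact
      h.surjective).linearMap_ker_eq
  surjective := LinearMap.surjective_rangeRestrict _

variable [Module.Projective R P]

theorem eval_injective_left (h : IsShortExact f g) : Function.Injective (Module.Dual.eval R Z) :=
  (injective_iff_map_eq_zero _).2 fun z hz => (injective_iff_map_eq_zero _).1 h.injective z <|
    (Module.forall_dual_apply_eq_zero_iff R _).1 fun ψ => LinearMap.congr_fun hz (f.dualMap ψ)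

theorem subsingleton_dual_quotient_range (h : IsShortExact f g)
    (hZ : Function.Surjective (Module.Dual.eval R Z)) :
    Subsingleton (Module.Dual R (Module.Dual R Z ⧸ LinearMap.range f.dualMap)) := by
  refine subsingleton_of_forall_eq 0 fun γ => ?_
  obtain ⟨z, hz⟩ := hZ (γ ∘ₗ Submodule.mkQ _)
  have hfz : f z = 0 := (Module.forall_dual_apply_eq_zero_iff R _).1 fun ψ => by
    have hψ : Submodule.Quotient.mk (p := LinearMap.range f.dualMap) (f.dualMap ψ) = 0 :=
      (Submodule.Quotient.mk_eq_zero _).2 (LinearMap.mem_range_self _ ψ)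
    simpa [hψ] using LinearMap.congr_fun hz (f.dualMap ψ)
  obtain rfl : z = 0 := (injective_iff_map_eq_zero _).1 h.injective z hfz
  exact Submodule.linearMap_qext _ (by rw [← hz, map_zero, LinearMap.zero_comp])

variable [Module.Finite R P]

theorem lcomp_range_dualMap_eval_surjective (h : IsShortExact f g)
    (hM : Function.Injective (Module.Dual.eval R M)) :
    Function.Surjective
      (LinearMap.lcomp R R (LinearMap.range f.dualMap).subtype ∘ₗ Module.Dual.eval R Z) := by
  intro γ
  obtain ⟨p, hp⟩ := (Module.bijective_dual_eval R P).2 (γ ∘ₗ f.dualMap.rangeRestrict)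
  have hp_apply : ∀ ψ : Module.Dual R P, ψ p = γ (f.dualMap.rangeRestrict ψ) :=
    LinearMap.congr_fun hp
  have hgp : g p = 0 := by
    refine hM (LinearMap.ext fun ψ => ?_)
    have hψ : f.dualMap.rangeRestrict (g.dualMap ψ) = 0 :=
      h.dual_rangeRestrict.exact.apply_apply_eq_zero ψ
    simpa [hψ] using hp_apply (g.dualMap ψ)
  obtain ⟨z, rfl⟩ := (h.exact p).1 hgp
  refine ⟨z, LinearMap.ext ?_⟩
  rintro ⟨_, ψ, rfl⟩
  exact hp_apply ψ

theorem natCast_le_extGrade_quotient_range {a : ℕ} (h : IsShortExact f g) (hZ : IsGDimZero R Z)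
    (hM : 0 < a → Function.Injective (Module.Dual.eval R M))
    (hL : ∀ i, i + 1 < a → Subsingleton (ModExt R (i + 1) (LinearMap.range f.dualMap) R)) :
    ((a + 1 : ℕ) : ℕ∞) ≤ extGrade R (Module.Dual R Z ⧸ LinearMap.range f.dualMap) R := by
  obtain ⟨_, heval, -, hZ'⟩ := isGDimZero_iff.1 hZ
  have hmkQ := isShortExact_subtype_mkQ (LinearMap.range f.dualMap)
  refine natCast_le_extGrade_iff.2 fun i hi => ?_
  match i with
  | 0 => exact subsingleton_ext_zero_iff.2 (h.subsingleton_dual_quotient_range heval.2)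
  | 1 =>
    have := hZ' 0
    exact hmkQ.subsingleton_ext_one_iff.2 <|
      .of_comp (g := Module.Dual.eval R Z) (h.lcomp_range_dualMap_eval_surjective (hM (by omega)))
  | i + 2 =>
    have := hL i (by omega)
    have := hZ' (i + 1)
    exact (hmkQ.connecting_surjective (i := i + 1)).subsingleton

theorem subsingleton_ext_range_dualMap_syzygy {K Q : Type u} [AddCommGroup K] [Module R K]
    [AddCommGroup Q] [Module R Q] [Module.Finite R Q] [Module.Projective R Q] {f' : K →ₗ[R] Q}
    {g' : Q →ₗ[R] Z} {a : ℕ} (h : IsShortExact f g) (h' : IsShortExact f' g')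
    (hf : Function.Surjective f.dualMap) (hM : 0 < a → Function.Injective (Module.Dual.eval R M))
    (hL : ∀ i, i + 1 < a → Subsingleton (ModExt R (i + 1) (LinearMap.range f.dualMap) R)) :
    ∀ i, i + 1 < a + 1 → Subsingleton (ModExt R (i + 1) (LinearMap.range f'.dualMap) R)
  | 0, hi => by
    refine h'.dual_rangeRestrict.subsingleton_ext_one_iff.2 fun γ => ?_
    obtain ⟨z, hz⟩ := h.lcomp_range_dualMap_eval_surjective (hM (by omega))
      (γ ∘ₗ (LinearMap.range f.dualMap).subtype)
    obtain ⟨q, rfl⟩ := h'.surjective z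
    refine ⟨Module.Dual.eval R Q q, LinearMap.ext fun χ => ?_⟩
    exact LinearMap.congr_fun hz ⟨χ, LinearMap.mem_range.2 (hf χ)⟩
  | i + 1, hi => by
    have := (subsingleton_ext_congr_left (LinearEquiv.ofTop _ (LinearMap.range_eq_top.2 hf))).1
      (hL i (by omega))
    exact (h'.dual_rangeRestrict.connecting_surjective (i := i + 1)).subsingleton

end IsShortExact

end DualImage

section ExtModule

variable {R : Type u} [CommRing R] [IsNoetherianRing R] {n : ℕ}
  {X Z P M : Type u} [AddCommGroup X] [Module R X] [AddCommGroup Z] [Module R Z] [AddCommGroup P]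
  [Module R P] [AddCommGroup M] [Module R M] [Module.Finite R P] [Module.Projective R P]

namespace IsShortExact

variable {f : Z →ₗ[R] P} {g : P →ₗ[R] M}

-- The induction on `n` replaces `M` by its syzygy `Z`; the number `a` keeps track of the vanishing
-- of `Ext^i(λ-, R)` gained on the way.
theorem natCast_le_extGrade_ext {a : ℕ} (h : IsShortExact f g)
    (hG : GDimLE R (n + 1) (ModuleCat.of R M))
    (hExt : ∀ i < n, Subsingleton (ModExt R (i + 1) M R))
    (hM : 0 < a → Function.Injective (Module.Dual.eval R M))
    (hL : ∀ i, i + 1 < a → Subsingleton (ModExt R (i + 1) (LinearMap.range f.dualMap) R)) :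
    ((n + 1 + a : ℕ) : ℕ∞) ≤ extGrade R (ModExt R (n + 1) M R) R := by
  induction n generalizing M Z P a with
  | zero =>
    rw [← extGrade_congr_left (h.extOneEquiv R), add_comm]
    exact h.natCast_le_extGrade_quotient_range (h.gDimLE_left hG) hM hL
  | succ n ih =>
    have := hExt 0 n.succ_pos
    have : Module.Finite R Z := Module.Finite.of_injective f h.injective
    obtain ⟨r, p, hp⟩ := Module.Finite.exists_fin' R Z
    have hker := isShortExact_ker_subtype hp
    have hExtZ : ∀ i < n, Subsingleton (ModExt R (i + 1) Z R) := fun i hi =>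
      (h.extShift i R).toEquiv.subsingleton_congr.2 (hExt (i + 1) (by omega))
    rw [← extGrade_congr_left (h.extShift n R), add_right_comm]
    exact ih hker (h.gDimLE_left hG) hExtZ (fun _ => h.eval_injective_left)
      (h.subsingleton_ext_range_dualMap_syzygy hker h.lcomp_surjective hM hL)

theorem extGrade_range_dualMap (h : IsShortExact f g)
    (hG : GDimLE R (n + 1) (ModuleCat.of R M))
    (hExt : ∀ i < n, Subsingleton (ModExt R (i + 1) M R))
    (hlt : extGrade R X (ModExt R (n + 1) M R) + n < extGrade R X R) :
    extGrade R X (LinearMap.range f.dualMap) =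
      extGrade R X (ModExt R (n + 1) M R) + (n + 1 : ℕ) := by
  induction n generalizing M Z P with
  | zero =>
    obtain ⟨_, -, hZ, -⟩ := isGDimZero_iff.1 (h.gDimLE_left hG)
    have e : (Module.Dual R Z ⧸ LinearMap.range f.dualMap) ≃ₗ[R] ModExt R (0 + 1) M R :=
      h.extOneEquiv R
    rw [← extGrade_congr e] at hlt ⊢
    refine (isShortExact_subtype_mkQ _).extGrade_left_of_lt ?_
    exact lt_of_lt_of_le (by simpa using hlt) (extGrade_self_le_dual hZ)
  | succ n ih =>
    have := hExt 0 n.succ_pos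
    have : Module.Finite R Z := Module.Finite.of_injective f h.injective
    obtain ⟨r, p, hp⟩ := Module.Finite.exists_fin' R Z
    have hker := isShortExact_ker_subtype hp
    have hExtZ : ∀ i < n, Subsingleton (ModExt R (i + 1) Z R) := fun i hi =>
      (h.extShift i R).toEquiv.subsingleton_congr.2 (hExt (i + 1) (by omega))
    rw [← extGrade_congr (h.extShift n R)] at hlt ⊢
    have hL := ih hker (h.gDimLE_left hG) hExtZ (lt_of_le_of_lt (by gcongr; simp) hlt)
    have hf : Function.Surjective f.dualMap := h.lcomp_surjective
    rw [extGrade_congr (LinearEquiv.ofTop _ (LinearMap.range_eq_top.2 hf)),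
      hker.dual_rangeRestrict.extGrade_left_of_lt
        (lt_of_lt_of_le (hL ▸ hlt) extGrade_self_le_of_free), hL]
    push_cast
    ring

end IsShortExact

end ExtModule

theorem IsShortExact.extGrade_residue_range_dualMap {R Z P M : Type u} [CommRing R]
    [IsNoetherianRing R] [IsLocalRing R] [AddCommGroup Z] [Module R Z] [AddCommGroup P]
    [Module R P] [Module.Finite R P] [Module.Projective R P] [AddCommGroup M] [Module R M]
    {f : Z →ₗ[R] P} {g : P →ₗ[R] M} (h : IsShortExact f g) {d n : ℕ}
    (hdim : ringKrullDim R = ((d : ℕ∞) : WithBot ℕ∞))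
    (hR : extGrade R (R ⧸ IsLocalRing.maximalIdeal R) R = d)
    (hG : GDimLE R (n + 1) (ModuleCat.of R M))
    (hExt : ∀ i < n, Subsingleton (ModExt R (i + 1) M R))
    (hE : ¬ Subsingleton (ModExt R (n + 1) M R)) :
    extGrade R (R ⧸ IsLocalRing.maximalIdeal R) (LinearMap.range f.dualMap) =
      extGrade R (R ⧸ IsLocalRing.maximalIdeal R) (ModExt R (n + 1) M R) + (n + 1 : ℕ) := by
  have : Module.Finite R M := Module.Finite.of_surjective g h.surjective
  have : Nontrivial (ModExt R (n + 1) M R) := not_subsingleton_iff_nontrivial.1 hE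
  have hgrade := h.natCast_le_extGrade_ext (a := 0) hG hExt (by simp) (by simp)
  have hdepth := extGrade_residue_add_le hdim hgrade
  refine h.extGrade_range_dualMap hG hExt ?_
  rw [hR, ← ENat.add_one_le_natCast_iff]
  simpa [add_assoc] using hdepth

section ReducedGrade

variable {R : Type u} [CommRing R] {M : Type u} [AddCommGroup M] [Module R M] {n : ℕ}

theorem gDimLE_of_gDim_eq (h : GDim R M = n) : GDimLE R n (ModuleCat.of R M) :=
  (sInf_eq_natCast_iff.1 h).1

theorem rgr_eq_natCast_iff :
    rgr R M = n ↔ (0 < n ∧ ¬ Subsingleton (ModExt R n M R)) ∧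
      ∀ k < n, 0 < k → Subsingleton (ModExt R k M R) := by
  simp only [rgr, sInf_eq_natCast_iff, not_and, not_not,
    (extMEquiv _ M R).toEquiv.subsingleton_congr]

end ReducedGrade

namespace MinRes

variable {R M : Type u} [CommRing R] [AddCommGroup M] [Module R M]

/-- `λM` as the image of `P₀* → (ΩM)*`. -/
def lambdaModEquiv (F : MinRes R M) :
    LinearMap.range (LinearMap.ker F.ε).subtype.dualMap ≃ₗ[R] F.lambdaMod :=
  rangeDualMapCompEquiv
    ((F.d 0).codRestrict (LinearMap.ker F.ε) fun x => F.exact0 ▸ LinearMap.mem_range_self _ x)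
    (fun ⟨y, hy⟩ => (F.exact0 ▸ hy : y ∈ LinearMap.range (F.d 0)).imp fun _ => Subtype.ext) _

theorem extGrade_lambdaMod (F : MinRes R M) (X : Type u) [AddCommGroup X] [Module R X] :
    extGrade R X F.lambdaMod =
      extGrade R X (LinearMap.range (LinearMap.ker F.ε).subtype.dualMap) :=
  (extGrade_congr (A := LinearMap.range (LinearMap.ker F.ε).subtype.dualMap)
    F.lambdaModEquiv).symm

end MinRes

end

section Statements

variable (R : Type u) [CommRing R] [IsNoetherianRing R]

theorem stmt9 [IsLocalRing R] (d : ℕ) (hdim : ringKrullDim R = ((d : ℕ∞) : WithBot ℕ∞))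
    (hCM : rdepth R = (d : ℕ∞))
    (M : Type u) [AddCommGroup M] [Module R M] [Module.Finite R M]
    (F : MinRes R M) (n : ℕ) (hG : GDim R M = (n : ℕ∞)) (hred : rgr R M = (n : ℕ∞)) :
    edepth R (IsLocalRing.maximalIdeal R) M +
        edepth R (IsLocalRing.maximalIdeal R) F.lambdaMod =
      (d : ℕ∞) + edepth R (IsLocalRing.maximalIdeal R) (extM R n M R) := by
  obtain ⟨⟨hn, hE⟩, hExt⟩ := rgr_eq_natCast_iff.1 hred
  obtain ⟨m, rfl⟩ : ∃ m, n = m + 1 := Nat.exists_eq_succ_of_ne_zero hn.ne'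
  have hGLE := gDimLE_of_gDim_eq hG
  have hExt_succ : ∀ i < m, Subsingleton (ModExt R (i + 1) M R) := fun i hi =>
    hExt (i + 1) (by omega) i.succ_pos
  have := F.projective 0
  have := F.finite 0
  have hF := isShortExact_ker_subtype F.surj
  rw [rdepth, edepth_eq_extGrade] at hCM
  simp only [edepth_eq_extGrade, F.extGrade_lambdaMod, extGrade_congr (extMEquiv (m + 1) M R)]
  rw [hF.extGrade_residue_range_dualMap hdim hCM hGLE hExt_succ hE,
    ← extGrade_residue_add_eq_of_gDimLE hCM hGLE hE, add_left_comm, add_comm]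

end Statements
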